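/- (Example 2: 4-qubit mixed entangled state.) Let e₀, e₁, e₂, e₃ be the standard basis of ℂ⁴ (identifying e₀ = |00⟩, e₃ = |11⟩), and for w ∈ ℂ⁴ let w wᴴ denote the matrix with entries w_j · conj(w_k). For every θ ∈ ℝ, the 2-setting, 4-outcome family ρ̃ : Fin 2 → Fin 4 → Matrix 4 4 ℂ given by: setting 0: ρ̃ 0 0 = (cos²θ/4) • (e₀+e₃)(e₀+e₃)ᴴ, ρ̃ 0 1 = (sin²θ/4) • (e₀+e₃)(e₀+e₃)ᴴ, ρ̃ 0 2 = (sin²θ/4) • (e₀−e₃)(e₀−e₃)ᴴ, ρ̃ 0 3 = (cos²θ/4) • (e₀−e₃)(e₀−e₃)ᴴ; setting 1: ρ̃ 1 0 = (1/8) • (e₀+i·e₃)(e₀+i·e₃)ᴴ, ρ̃ 1 1 = (1/8) • (e₀−i·e₃)(e₀−i·e₃)ᴴ, ρ̃ 1 2 = (1/8) • (e₀−i·e₃)(e₀−i·e₃)ᴴ, ρ̃ 1 3 = (1/8) • (e₀+i·e₃)(e₀+i·e₃)ᴴ; admits no LHS model (the EPR steering paradox '2_Q = 1_C' for the mixed state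 cos²θ|LC₄⟩⟨LC₄| + sin²θ|LC₄'⟩⟨LC₄'| of two linear cluster states under the zz and yx measurement settings). -/

import Mathlib

open Matrix BigOperators
open scoped ComplexOrder

noncomputable section

/-- A density matrix: positive semidefinite with trace 1. -/
def IsDensityMatrix {n : ℕ} (A : Matrix (Fin n) (Fin n) ℂ) : Prop :=
  A.PosSemidef ∧ A.trace = 1

/-- An unnormalized pure state: a nonnegative real multiple of a rank-one
projection `v vᴴ` onto a unit vector `v`. -/
def IsUnnormalizedPure {n : ℕ} (A : Matrix (Fin n) (Fin n) ℂ) : Prop :=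
  ∃ (c : ℝ) (v : Fin n → ℂ), 0 ≤ c ∧ star v ⬝ᵥ v = 1 ∧ A = c • vecMulVec v (star v)

/-- `A` is a positive real multiple of `B`. -/
def IsPosMultiple {n : ℕ} (A B : Matrix (Fin n) (Fin n) ℂ) : Prop :=
  ∃ c : ℝ, 0 < c ∧ A = c • B

/-- A local-hidden-state (LHS) model for a family of unnormalized conditional
states `ρt ℓ a` (setting `ℓ`, outcome `a`). -/
def HasLHSModel {n k : ℕ} {O : Type*} [Fintype O]
    (ρt : Fin k → O → Matrix (Fin n) (Fin n) ℂ) : Prop :=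
  ∃ (m : ℕ) (w : Fin m → ℝ) (ρ : Fin m → Matrix (Fin n) (Fin n) ℂ)
    (p : O → Fin k → Fin m → ℝ),
    (∀ ξ, 0 ≤ w ξ) ∧ ((∑ ξ, w ξ) = 1) ∧
    (∀ ξ, IsDensityMatrix (ρ ξ)) ∧
    (∀ a ℓ ξ, 0 ≤ p a ℓ ξ) ∧
    (∀ ℓ ξ, (∑ a, p a ℓ ξ) = 1) ∧
    (∀ ℓ a, ρt ℓ a = ∑ ξ, p a ℓ ξ • w ξ • ρ ξ)

/-! If a positive semidefinite matrix `A` is a sum of positive semidefinite matrices, then `A x = 0`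
forces every summand to annihilate `x`. Hence a hidden state `σ` of positive weight annihilates, for
each setting `ℓ`, the kernel of some conditional state `ρt ℓ (a ℓ)`, namely for an outcome `a ℓ` to
which `σ` responds with positive probability. When the conditional states of two settings are
multiples of projections onto distinct lines, two such kernels contain different hyperplanes, which
together span the whole space; then `σ = 0`, against `tr σ = 1`. -/

section Kernel

variable {κ : Type*} [Fintype κ]

theorem ker_mulVecLin_sum_le_of_posSemidef {𝕜 ι : Type*} [RCLike 𝕜] {s : Finset ι}
    {A : ι → Matrix κ κ 𝕜} (hA : ∀ i ∈ s, (A i).PosSemidef) {i : ι} (hi : i ∈ s) :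
    LinearMap.ker (∑ j ∈ s, A j).mulVecLin ≤ LinearMap.ker (A i).mulVecLin := by
  intro x hx
  rw [LinearMap.mem_ker, mulVecLin_apply] at hx ⊢
  have sum_form_eq_zero : ∑ j ∈ s, star x ⬝ᵥ A j *ᵥ x = 0 := by
    rw [← dotProduct_sum, ← sum_mulVec, hx, dotProduct_zero]
  have form_nonneg : ∀ j ∈ s, 0 ≤ star x ⬝ᵥ A j *ᵥ x :=
    fun j hj ↦ (hA j hj).dotProduct_mulVec_nonneg x
  exact ((hA i hi).dotProduct_mulVec_zero_iff x).1
    ((Finset.sum_eq_zero_iff_of_nonneg form_nonneg).1 sum_form_eq_zero i hi)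

variable {𝕜 : Type*} [Field 𝕜] [PartialOrder 𝕜] [StarRing 𝕜] [StarOrderedRing 𝕜]

theorem exists_star_dotProduct_eq_zero_and_ne_zero {v w : κ → 𝕜}
    (h : LinearIndependent 𝕜 ![v, w]) : ∃ y, star w ⬝ᵥ y = 0 ∧ star v ⬝ᵥ y ≠ 0 := by
  -- The component of `v` orthogonal to `w`, multiplied by `star w ⬝ᵥ w` to avoid a division.
  let y := (star w ⬝ᵥ w) • v - (star w ⬝ᵥ v) • w
  have hwy : star w ⬝ᵥ y = 0 := by
    simp only [y, dotProduct_sub, dotProduct_smul, smul_eq_mul]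
    ring
  refine ⟨y, hwy, fun hvy ↦ ?_⟩
  have hyv : star y ⬝ᵥ v = 0 := by rw [star_dotProduct, hvy, star_zero]
  have hyw : star y ⬝ᵥ w = 0 := by rw [star_dotProduct, hwy, star_zero]
  have hy : y = 0 := by
    rw [← dotProduct_star_self_eq_zero]
    calc star y ⬝ᵥ y = (star w ⬝ᵥ w) * (star y ⬝ᵥ v) - (star w ⬝ᵥ v) * (star y ⬝ᵥ w) := by
          simp only [y, dotProduct_sub, dotProduct_smul, smul_eq_mul]
      _ = 0 := by rw [hyv, hyw, mul_zero, mul_zero, sub_zero]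
  have hww : star w ⬝ᵥ w = 0 :=
    (LinearIndependent.pair_iff.1 h _ (-(star w ⬝ᵥ v)) (by rwa [neg_smul, ← sub_eq_add_neg])).1
  have hw : w ≠ 0 := h.ne_zero 1
  exact hw (dotProduct_star_self_eq_zero.1 hww)

theorem ker_mulVecLin_vecMulVec_sup_eq_top {v w : κ → 𝕜} (h : LinearIndependent 𝕜 ![v, w]) :
    LinearMap.ker (vecMulVec v (star v)).mulVecLin ⊔
      LinearMap.ker (vecMulVec w (star w)).mulVecLin = ⊤ := by
  have mem_ker {u x : κ → 𝕜} (hx : star u ⬝ᵥ x = 0) :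
      x ∈ LinearMap.ker (vecMulVec u (star u)).mulVecLin := by
    rw [LinearMap.mem_ker, mulVecLin_apply, vecMulVec_mulVec, hx, MulOpposite.op_zero, zero_smul]
  obtain ⟨y, hwy, hvy⟩ := exists_star_dotProduct_eq_zero_and_ne_zero h
  refine Submodule.eq_top_iff'.2 fun x ↦ Submodule.mem_sup.2
    ⟨x - (star v ⬝ᵥ x / star v ⬝ᵥ y) • y, mem_ker ?_, (star v ⬝ᵥ x / star v ⬝ᵥ y) • y, mem_ker ?_,
      sub_add_cancel _ _⟩
  · rw [dotProduct_sub, dotProduct_smul, smul_eq_mul, div_mul_cancel₀ _ hvy, sub_self]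
  · rw [dotProduct_smul, hwy, smul_zero]

end Kernel

theorem HasLHSModel.exists_isDensityMatrix_forall_exists_ker_le {n k : ℕ} {O : Type*} [Fintype O]
    {ρt : Fin k → O → Matrix (Fin n) (Fin n) ℂ} (h : HasLHSModel ρt) :
    ∃ σ, IsDensityMatrix σ ∧
      ∀ ℓ, ∃ a, LinearMap.ker (ρt ℓ a).mulVecLin ≤ LinearMap.ker σ.mulVecLin := by
  obtain ⟨m, w, ρ, p, hw, hw_sum, hρ, hp, hp_sum, hρt⟩ := h
  obtain ⟨ξ, -, hξ⟩ : ∃ ξ ∈ Finset.univ, 0 < w ξ :=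
    Finset.exists_lt_of_sum_lt (by simp [hw_sum])
  refine ⟨ρ ξ, hρ ξ, fun ℓ ↦ ?_⟩
  obtain ⟨a, -, ha⟩ : ∃ a ∈ Finset.univ, 0 < p a ℓ ξ :=
    Finset.exists_lt_of_sum_lt (by simp [hp_sum])
  refine ⟨a, ?_⟩
  have term_posSemidef : ∀ η ∈ Finset.univ, (p a ℓ η • w η • ρ η).PosSemidef :=
    fun η _ ↦ ((hρ η).1.smul (hw η)).smul (hp a ℓ η)
  calc LinearMap.ker (ρt ℓ a).mulVecLin
      = LinearMap.ker (∑ η, p a ℓ η • w η • ρ η).mulVecLin := by rw [hρt]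
    _ ≤ LinearMap.ker (p a ℓ ξ • w ξ • ρ ξ).mulVecLin :=
        ker_mulVecLin_sum_le_of_posSemidef term_posSemidef (Finset.mem_univ ξ)
    _ ≤ LinearMap.ker (ρ ξ).mulVecLin := fun x hx ↦ by
        simpa [smul_mulVec, ha.ne', hξ.ne'] using hx

theorem not_hasLHSModel_of_forall_iSup_ker_eq_top {n k : ℕ} {O : Type*} [Fintype O]
    {ρt : Fin k → O → Matrix (Fin n) (Fin n) ℂ}
    (h : ∀ a : Fin k → O, ⨆ ℓ, LinearMap.ker (ρt ℓ (a ℓ)).mulVecLin = ⊤) :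
    ¬ HasLHSModel ρt := by
  intro hρt
  obtain ⟨σ, ⟨-, trace_eq_one⟩, hσ⟩ := hρt.exists_isDensityMatrix_forall_exists_ker_le
  choose a ha using hσ
  have σ_eq_zero : σ = 0 := by
    rw [← toLin'.map_eq_zero_iff, toLin'_apply', ← LinearMap.ker_eq_top, eq_top_iff, ← h a]
    exact iSup_le ha
  simp [σ_eq_zero] at trace_eq_one

theorem not_hasLHSModel_of_linearIndependent {n k : ℕ} {O : Type*} [Fintype O]
    {ρt : Fin k → O → Matrix (Fin n) (Fin n) ℂ} {i j : Fin k} {c d : O → ℝ}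
    {v w : O → Fin n → ℂ} (hi : ∀ a, ρt i a = c a • vecMulVec (v a) (star (v a)))
    (hj : ∀ b, ρt j b = d b • vecMulVec (w b) (star (w b)))
    (hvw : ∀ a b, LinearIndependent ℂ ![v a, w b]) :
    ¬ HasLHSModel ρt := by
  have ker_le_ker_smul (r : ℝ) (u : Fin n → ℂ) :
      LinearMap.ker (vecMulVec u (star u)).mulVecLin ≤
        LinearMap.ker (r • vecMulVec u (star u)).mulVecLin := fun x hx ↦ by
    rw [LinearMap.mem_ker, mulVecLin_apply] at hx ⊢
    rw [smul_mulVec, hx, smul_zero]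
  refine not_hasLHSModel_of_forall_iSup_ker_eq_top fun a ↦ eq_top_iff.2 ?_
  rw [← ker_mulVecLin_vecMulVec_sup_eq_top (hvw (a i) (a j))]
  refine sup_le (le_iSup_of_le i ?_) (le_iSup_of_le j ?_)
  · exact hi (a i) ▸ ker_le_ker_smul _ _
  · exact hj (a j) ▸ ker_le_ker_smul _ _

theorem linearIndependent_pair_of_apply_eq_one_of_apply_ne {R κ : Type*} [CommRing R] [IsDomain R]
    {v w : κ → R} {i j : κ} (hv : v i = 1) (hw : w i = 1) (h : v j ≠ w j) :
    LinearIndependent R ![v, w] := by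
  refine LinearIndependent.pair_iff.2 fun x y hxy ↦ ?_
  have coord_i : x + y = 0 := by simpa [hv, hw] using congrFun hxy i
  have coord_j : x * v j + y * w j = 0 := by simpa using congrFun hxy j
  have hx : x = 0 := by
    refine (mul_eq_zero.1 ?_).resolve_right (sub_ne_zero.2 h)
    linear_combination coord_j - w j * coord_i
  exact ⟨hx, by simpa [hx] using coord_i⟩

theorem example2_four_qubit_mixed_general {k : ℕ} {O : Type*} [Fintype O]
    {ρt : Fin k → O → Matrix (Fin 4) (Fin 4) ℂ} {i j : Fin k} (c d : O → ℝ) (s t : O → ℂ)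
    (hi : ∀ a, ρt i a = c a • vecMulVec ![1, 0, 0, s a] (star ![1, 0, 0, s a]))
    (hj : ∀ b, ρt j b = d b • vecMulVec ![1, 0, 0, t b] (star ![1, 0, 0, t b]))
    (hst : ∀ a b, s a ≠ t b) :
    ¬ HasLHSModel ρt :=
  not_hasLHSModel_of_linearIndependent hi hj fun a b ↦
    linearIndependent_pair_of_apply_eq_one_of_apply_ne (i := 0) (j := 3) rfl rfl (hst a b)

/-- Example 2, 4-qubit mixed entangled state: for any `θ`,
Bob's eight unnormalized conditional states (on his two qubits, dimension 4,
with `![1,0,0,1] = e₀ + e₃`, `![1,0,0,-1] = e₀ - e₃`,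
`![1,0,0,Complex.I] = e₀ + i·e₃`, `![1,0,0,-Complex.I] = e₀ - i·e₃`)
for the mixed state `cos²θ|LC₄⟩⟨LC₄| + sin²θ|LC₄'⟩⟨LC₄'|` under the `zz` and
`yx` settings admit no LHS model (the paradox "2_Q = 1_C"). -/
theorem example2_four_qubit_mixed (θ : ℝ)
    (ρt : Fin 2 → Fin 4 → Matrix (Fin 4) (Fin 4) ℂ)
    (h00 : ρt 0 0 = ((Real.cos θ) ^ 2 / 4 : ℝ) •
      vecMulVec ![1, 0, 0, 1] (star ![1, 0, 0, 1]))
    (h01 : ρt 0 1 = ((Real.sin θ) ^ 2 / 4 : ℝ) •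
      vecMulVec ![1, 0, 0, 1] (star ![1, 0, 0, 1]))
    (h02 : ρt 0 2 = ((Real.sin θ) ^ 2 / 4 : ℝ) •
      vecMulVec ![1, 0, 0, -1] (star ![1, 0, 0, -1]))
    (h03 : ρt 0 3 = ((Real.cos θ) ^ 2 / 4 : ℝ) •
      vecMulVec ![1, 0, 0, -1] (star ![1, 0, 0, -1]))
    (h10 : ρt 1 0 = (1 / 8 : ℝ) •
      vecMulVec ![1, 0, 0, Complex.I] (star ![1, 0, 0, Complex.I]))
    (h11 : ρt 1 1 = (1 / 8 : ℝ) •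
      vecMulVec ![1, 0, 0, -Complex.I] (star ![1, 0, 0, -Complex.I]))
    (h12 : ρt 1 2 = (1 / 8 : ℝ) •
      vecMulVec ![1, 0, 0, -Complex.I] (star ![1, 0, 0, -Complex.I]))
    (h13 : ρt 1 3 = (1 / 8 : ℝ) •
      vecMulVec ![1, 0, 0, Complex.I] (star ![1, 0, 0, Complex.I])) :
    ¬ HasLHSModel ρt := by
  refine example2_four_qubit_mixed_general (i := 0) (j := 1)
    ![Real.cos θ ^ 2 / 4, Real.sin θ ^ 2 / 4, Real.sin θ ^ 2 / 4, Real.cos θ ^ 2 / 4]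
    (fun _ ↦ 1 / 8) ![1, 1, -1, -1] ![Complex.I, -Complex.I, -Complex.I, Complex.I] ?_ ?_ ?_
  · intro a; fin_cases a; exacts [h00, h01, h02, h03]
  · intro b; fin_cases b; exacts [h10, h11, h12, h13]
  · simp [Fin.forall_fin_succ, Complex.ext_iff]
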